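/- Let G = (V, E) be a d-uniform hypergraph with d ≥ 2, let β, β⁻ be integers with β − β⁻ ≥ d − 1, and for a subgraph H ⊆ E define the potential Φ(H) = ((2β − (d−1))/d) · Σ_{v∈V} d_H(v) − Σ_{e∈H} Σ_{u∈e} d_H(u). If e ∈ E \ H satisfies Σ_{v∈e} d_H(v) ≤ β⁻ − 1, then Φ(H ∪ {e}) ≥ Φ(H) + 1. -/

import Mathlib

/-!
Adding an edge `e ∉ H` raises the degree of each vertex of `e` by one, so it changes the edge-degree
sum `∑ f ∈ H, ∑ u ∈ f, d_H(u)` in two ways. The new edge contributes `∑ v ∈ e, d_H(v) + d`, and the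
old edges gain `∑ f ∈ H, |f ∩ e|`, which is again `∑ v ∈ e, d_H(v)` by double counting. The factor
`1 / d` in the potential makes the gain of the first term exactly `2β - (d - 1)`, so the potential
grows by exactly `2 (β - d - ∑ v ∈ e, d_H(v)) + 1`, and the parenthesis is nonnegative.
-/

open Finset

/-- The degree of a vertex `v` in a hypergraph (set of hyperedges) `H`. -/
def deg {V : Type*} [DecidableEq V] (H : Finset (Finset V)) (v : V) : ℕ :=
  (H.filter (fun e => v ∈ e)).card

section Degree

variable {V : Type*} [DecidableEq V] {H : Finset (Finset V)} {e : Finset V}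

theorem deg_insert (he : e ∉ H) (v : V) :
    deg (insert e H) v = deg H v + if v ∈ e then 1 else 0 := by
  unfold deg
  rw [filter_insert]
  split_ifs with hv
  · exact card_insert_of_notMem fun h => he (mem_of_mem_filter e h)
  · rfl

theorem sum_deg_insert (he : e ∉ H) (s : Finset V) :
    ∑ v ∈ s, deg (insert e H) v = ∑ v ∈ s, deg H v + #(s ∩ e) := by
  simp only [deg_insert he, sum_add_distrib, sum_boole, filter_mem_eq_inter, Nat.cast_id]

theorem sum_card_inter_eq_sum_deg (H : Finset (Finset V)) (s : Finset V) :
    ∑ f ∈ H, #(f ∩ s) = ∑ v ∈ s, deg H v := by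
  simp only [inter_comm _ s, ← filter_mem_eq_inter]
  exact (sum_card_bipartiteAbove_eq_sum_card_bipartiteBelow (· ∈ ·)).symm

theorem sum_sum_deg_insert (he : e ∉ H) :
    ∑ f ∈ insert e H, ∑ u ∈ f, deg (insert e H) u =
      ∑ f ∈ H, ∑ u ∈ f, deg H u + 2 * ∑ v ∈ e, deg H v + #e := by
  have new_edge : ∑ u ∈ e, deg (insert e H) u = ∑ v ∈ e, deg H v + #e := by
    rw [sum_deg_insert he, inter_self]
  have old_edges : ∑ f ∈ H, ∑ u ∈ f, deg (insert e H) u =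
      ∑ f ∈ H, ∑ u ∈ f, deg H u + ∑ v ∈ e, deg H v := by
    simp only [sum_deg_insert he, sum_add_distrib, sum_card_inter_eq_sum_deg]
  rw [sum_insert he, new_edge, old_edges]
  ring

end Degree

section Potential

variable {V K : Type*} [Fintype V] [DecidableEq V] [Field K]

/-- The potential `Φ(H)` of a set of hyperedges `H` with parameter `β`, a quantity that grows when
an edge with small degree sum is added. It takes values in an arbitrary field, and `d` is a free
parameter: the edges of `H` need not have cardinality `d`. If `d = 0` in `K`, the first term is zero
by the convention `x / 0 = 0`. -/
def potential (d : ℕ) (β : K) (H : Finset (Finset V)) : K :=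
  ((2 * β - ((d : K) - 1)) / d) * (∑ v : V, (deg H v : K)) - ∑ e ∈ H, ∑ u ∈ e, (deg H u : K)

theorem potential_insert {d : ℕ} (hd : (d : K) ≠ 0) (β : K) {H : Finset (Finset V)}
    {e : Finset V} (hcard : #e = d) (he : e ∉ H) :
    potential d β (insert e H) =
      potential d β H + (2 * (β - d - ∑ v ∈ e, (deg H v : K)) + 1) := by
  have degree_sum : ∑ v : V, (deg (insert e H) v : K) = ∑ v : V, (deg H v : K) + d := by
    have h := sum_deg_insert he univ
    rw [univ_inter, hcard] at h
    exact_mod_cast congrArg (Nat.cast : ℕ → K) h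
  have edge_degree_sum : ∑ f ∈ insert e H, ∑ u ∈ f, (deg (insert e H) u : K) =
      ∑ f ∈ H, ∑ u ∈ f, (deg H u : K) + 2 * ∑ v ∈ e, (deg H v : K) + d := by
    have h := sum_sum_deg_insert he
    rw [hcard] at h
    exact_mod_cast congrArg (Nat.cast : ℕ → K) h
  rw [potential, potential, degree_sum, edge_degree_sum, mul_add, div_mul_cancel₀ _ hd]
  ring

theorem potential_increase_add_general [LinearOrder K] [IsStrictOrderedRing K]
    {d : ℕ} (hd : d ≠ 0) {β βm : K} (hgap : (d : K) - 1 ≤ β - βm)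
    {H : Finset (Finset V)} {e : Finset V} (hcard : #e = d) (he : e ∉ H)
    (hsmall : ∑ v ∈ e, (deg H v : K) ≤ βm - 1) :
    potential d β H + 1 ≤ potential d β (insert e H) := by
  have slack_nonneg : 0 ≤ β - d - ∑ v ∈ e, (deg H v : K) := by linarith
  rw [potential_insert (Nat.cast_ne_zero.mpr hd) β hcard he]
  linarith [slack_nonneg]

end Potential

/-- If an edge `e ∈ E \ H` violates property (P2), i.e. `∑_{v∈e} d_H(v) ≤ β⁻ − 1`,
then adding `e` increases the potential
`Φ(H) = ((2β − (d−1))/d)·∑_v d_H(v) − ∑_{e∈H} ∑_{u∈e} d_H(u)` by at least 1,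
provided `β − β⁻ ≥ d − 1`. -/
theorem potential_increase_add {V : Type*} [Fintype V] [DecidableEq V]
    (d : ℕ) (hd : 2 ≤ d)
    (E : Finset (Finset V)) (hE : ∀ e ∈ E, e.card = d)
    (β βm : ℤ) (hgap : (d : ℤ) - 1 ≤ β - βm)
    (Φ : Finset (Finset V) → ℝ)
    (hΦ : ∀ H : Finset (Finset V),
      Φ H = ((2 * (β : ℝ) - ((d : ℝ) - 1)) / d) * (∑ v : V, (deg H v : ℝ))
            - ∑ e ∈ H, ∑ u ∈ e, (deg H u : ℝ))
    (H : Finset (Finset V)) (hH : H ⊆ E)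
    (e : Finset V) (heE : e ∈ E) (heH : e ∉ H)
    (hsmall : ∑ v ∈ e, (deg H v : ℝ) ≤ (βm : ℝ) - 1) :
    Φ H + 1 ≤ Φ (insert e H) := by
  obtain rfl : Φ = potential d (β : ℝ) := funext hΦ
  exact potential_increase_add_general (by omega) (by exact_mod_cast hgap) (hE e heE) heH hsmall
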